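/- arXiv:1709.00210 — 3 statements merged into one kernel-verified Lean document; each statement's English description precedes it below -/
import Mathlib

section
/- Let 0 < α < 1, T > 0, and suppose f : [0,∞) × ℝ^s → ℝ^s is continuous with ‖f(t,x) − f(t,y)‖ ≤ L(t) ‖x − y‖ for a bounded nonnegative L; set L̄ := sup_{t∈[0,T]} L(t). For x₀ ∈ ℝ^s define the operator (T_{x₀}ξ)(t) := x₀ t^{α-1} + (1/Γ(α)) ∫₀^t (t-τ)^{α-1} f(τ, ξ(τ)) dτ on C_{1-α}([0,T], ℝ^s). Then for every γ > 0 and all ξ, ξ̃ ∈ C_{1-α}([0,T], ℝ^s), one has ‖T_{x₀}ξ − T_{x₀}ξ̃‖_{w,T} ≤ (L̄ 2^{2-α} / γ^α) ‖ξ − ξ̃‖_{w,T}, where ‖ξ‖_{w,T} := sup_{t∈[0,T]} t^{1-α} ‖ξ(t)‖ / e^{γt}. In particular, if γ is chosen so that L̄ 2^{2-α} / γ^α < 1, then T_{x₀} is a contraction with respect to ‖·‖_{w,T}. -/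
open Filter Topology MeasureTheory

/-- Membership in `C_{1-α}([0,T], ℝ^s)`: continuous on `(0,T]` and the limit
`lim_{t→0⁺} t^{1-α} ξ(t)` exists. -/
def memC (α : ℝ) {s : ℕ} (T : ℝ) (x : ℝ → (Fin s → ℝ)) : Prop :=
  ContinuousOn x (Set.Ioc 0 T) ∧
  ∃ l : Fin s → ℝ, Tendsto (fun t : ℝ => t ^ (1 - α) • x t) (𝓝[>] 0) (𝓝 l)

/-- The Bielecki-type weighted norm `‖ξ‖_{w,T} = sup_{t ∈ [0,T]} t^{1-α} ‖ξ(t)‖ e^{-γt}`. -/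
noncomputable def wnormT (α γ T : ℝ) {s : ℕ} (ξ : ℝ → (Fin s → ℝ)) : ℝ :=
  ⨆ t : Set.Icc (0:ℝ) T, (t : ℝ) ^ (1 - α) * ‖ξ t‖ / Real.exp (γ * t)

/-- The operator `(T_{x₀} ξ)(t) = x₀ t^{α-1} + Γ(α)⁻¹ ∫₀ᵗ (t-τ)^{α-1} f(τ, ξ(τ)) dτ`. -/
noncomputable def Tmap (α : ℝ) {s : ℕ} (f : ℝ → (Fin s → ℝ) → (Fin s → ℝ))
    (x₀ : Fin s → ℝ) (ξ : ℝ → (Fin s → ℝ)) (t : ℝ) : Fin s → ℝ :=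
  t ^ (α - 1) • x₀ + (Real.Gamma α)⁻¹ • ∫ τ in (0:ℝ)..t, (t - τ) ^ (α - 1) • f τ (ξ τ)

/-!
The weight `w t = t ^ (α - 1) * exp (γ * t)` is almost an eigenfunction of the Riemann–Liouville
integral `I^α`: `I^α w ≤ 2 ^ (2 - α) / γ ^ α * w`. To see this, split `[0, t]` at its midpoint. Of
the two singular factors `(t - τ) ^ (α - 1)` and `τ ^ (α - 1)`, at least one is at most
`(t / 2) ^ (α - 1)`, and the other one, multiplied by the exponential decay left over after
extracting `exp (γ * t)`, is dominated by a Gamma integral of total mass `Γ α / γ ^ α`.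
The weighted norm of `ξ` is the least `C` with `‖ξ‖ ≤ C * w` on `(0, T]`, so the Lipschitz bound on
`f` and the positivity of `I^α` give the contraction estimate.
-/

open scoped NNReal

/-- The function `t ^ (α - 1) * exp (γ * t)` against which the Bielecki norm with parameters
`α, γ` compares. With `-γ` in place of `γ` it is the integrand of `Γ α / γ ^ α`. -/
noncomputable def bieleckiWeight (α γ t : ℝ) : ℝ :=
  t ^ (α - 1) * Real.exp (γ * t)

section Weight

variable {α γ t τ : ℝ}

lemma bieleckiWeight_pos (ht : 0 < t) : 0 < bieleckiWeight α γ t :=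
  mul_pos (Real.rpow_pos_of_pos ht _) (Real.exp_pos _)

lemma bieleckiWeight_nonneg (ht : 0 ≤ t) : 0 ≤ bieleckiWeight α γ t :=
  mul_nonneg (Real.rpow_nonneg ht _) (Real.exp_pos _).le

lemma rpow_mul_div_exp_eq_div_bieleckiWeight (ht : 0 < t) (x : ℝ) :
    t ^ (1 - α) * x / Real.exp (γ * t) = x / bieleckiWeight α γ t := by
  rw [bieleckiWeight, ← neg_sub 1 α, Real.rpow_neg ht.le]
  field_simp

lemma two_rpow_mul_bieleckiWeight (ht : 0 ≤ t) :
    2 ^ (1 - α) * bieleckiWeight α γ t = (t / 2) ^ (α - 1) * Real.exp (γ * t) := by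
  rw [bieleckiWeight, Real.div_rpow ht zero_le_two, ← neg_sub α 1, Real.rpow_neg zero_le_two]
  ring

lemma sub_rpow_mul_bieleckiWeight_le (hα : α ≤ 1) (hγ : 0 ≤ γ) (hτ : 0 < τ) (hτt : τ ≤ t) :
    (t - τ) ^ (α - 1) * bieleckiWeight α γ τ ≤
      2 ^ (1 - α) * bieleckiWeight α γ t *
        (bieleckiWeight α (-γ) τ + bieleckiWeight α (-γ) (t - τ)) := by
  have ht : 0 < t := hτ.trans_le hτt
  have hsub : 0 ≤ t - τ := sub_nonneg.2 hτt
  rw [two_rpow_mul_bieleckiWeight ht.le]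
  rcases le_total τ (t / 2) with hle | hle
  · have hrpow : (t - τ) ^ (α - 1) ≤ (t / 2) ^ (α - 1) :=
      Real.rpow_le_rpow_of_nonpos (by linarith) (by linarith) (by linarith)
    have hexp : Real.exp (γ * τ) ≤ Real.exp (γ * t) * Real.exp (-γ * τ) := by
      rw [← Real.exp_add, Real.exp_le_exp]
      nlinarith
    calc (t - τ) ^ (α - 1) * (τ ^ (α - 1) * Real.exp (γ * τ))
        ≤ (t / 2) ^ (α - 1) * (τ ^ (α - 1) * (Real.exp (γ * t) * Real.exp (-γ * τ))) := by gcongr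
      _ = (t / 2) ^ (α - 1) * Real.exp (γ * t) * bieleckiWeight α (-γ) τ := by
        rw [bieleckiWeight]; ring
      _ ≤ _ := by
        gcongr
        exact le_add_of_nonneg_right (bieleckiWeight_nonneg hsub)
  · have hrpow : τ ^ (α - 1) ≤ (t / 2) ^ (α - 1) :=
      Real.rpow_le_rpow_of_nonpos (by linarith) hle (by linarith)
    have hexp : Real.exp (γ * τ) = Real.exp (γ * t) * Real.exp (-γ * (t - τ)) := by
      rw [← Real.exp_add]; ring_nf
    calc (t - τ) ^ (α - 1) * (τ ^ (α - 1) * Real.exp (γ * τ))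
        ≤ (t - τ) ^ (α - 1) * ((t / 2) ^ (α - 1) * Real.exp (γ * τ)) := by gcongr
      _ = (t / 2) ^ (α - 1) * Real.exp (γ * t) * bieleckiWeight α (-γ) (t - τ) := by
        rw [bieleckiWeight, hexp]; ring
      _ ≤ _ := by
        gcongr
        exact le_add_of_nonneg_left (bieleckiWeight_nonneg hτ.le)

lemma intervalIntegrable_bieleckiWeight (hα : 0 < α) (a b : ℝ) :
    IntervalIntegrable (bieleckiWeight α γ) volume a b :=
  (intervalIntegral.intervalIntegrable_rpow' (by linarith)).mul_continuousOn (by fun_prop)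

lemma integral_bieleckiWeight_neg_le (hα : 0 < α) (hγ : 0 < γ) (ht : 0 ≤ t) :
    ∫ τ in 0..t, bieleckiWeight α (-γ) τ ≤ Real.Gamma α / γ ^ α := by
  have hGamma : ∫ τ in Set.Ioi 0, bieleckiWeight α (-γ) τ = Real.Gamma α / γ ^ α := by
    simp only [bieleckiWeight, neg_mul, Real.integral_rpow_mul_exp_neg_mul_Ioi hα hγ,
      Real.div_rpow zero_le_one hγ.le, Real.one_rpow, one_div_mul_eq_div]
  have hpos : 0 < Real.Gamma α / γ ^ α :=
    div_pos (Real.Gamma_pos_of_pos hα) (Real.rpow_pos_of_pos hγ _)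
  rw [intervalIntegral.integral_of_le ht, ← hGamma]
  refine setIntegral_mono_set (.of_integral_ne_zero (hGamma ▸ hpos.ne')) ?_
    Set.Ioc_subset_Ioi_self.eventuallyLE
  filter_upwards [ae_restrict_mem measurableSet_Ioi] with τ hτ
  exact bieleckiWeight_nonneg (le_of_lt hτ)

lemma intervalIntegrable_bieleckiWeight_sub (hα : 0 < α) :
    IntervalIntegrable (fun τ => bieleckiWeight α γ (t - τ)) volume 0 t := by
  simpa using (intervalIntegrable_bieleckiWeight (γ := γ) hα t 0).comp_sub_left t

lemma intervalIntegrable_bieleckiWeight_add_sub (hα : 0 < α) :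
    IntervalIntegrable (fun τ => bieleckiWeight α γ τ + bieleckiWeight α γ (t - τ)) volume 0 t :=
  (intervalIntegrable_bieleckiWeight hα 0 t).add (intervalIntegrable_bieleckiWeight_sub hα)

lemma integral_bieleckiWeight_neg_add_sub_le (hα : 0 < α) (hγ : 0 < γ) (ht : 0 ≤ t) :
    ∫ τ in 0..t, (bieleckiWeight α (-γ) τ + bieleckiWeight α (-γ) (t - τ)) ≤
      2 * (Real.Gamma α / γ ^ α) := by
  rw [intervalIntegral.integral_add (intervalIntegrable_bieleckiWeight hα 0 t)
    (intervalIntegrable_bieleckiWeight_sub hα), intervalIntegral.integral_comp_sub_left,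
    sub_self, sub_zero, ← two_mul]
  gcongr
  exact integral_bieleckiWeight_neg_le hα hγ ht

end Weight

/-- The Riemann–Liouville fractional integral of order `α` with base point `0`. -/
noncomputable def riemannLiouville {E : Type*} [NormedAddCommGroup E] [NormedSpace ℝ E]
    (α : ℝ) (g : ℝ → E) (t : ℝ) : E :=
  (Real.Gamma α)⁻¹ • ∫ τ in 0..t, (t - τ) ^ (α - 1) • g τ

/-- The fixed-point operator of the fractional initial value problem with right-hand side `f`,
for functions with values in a normed space; `Tmap` is its case `ℝ^s`. -/
noncomputable def fractionalPicard {E : Type*} [NormedAddCommGroup E] [NormedSpace ℝ E]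
    (α : ℝ) (f : ℝ → E → E) (x₀ : E) (ξ : ℝ → E) (t : ℝ) : E :=
  t ^ (α - 1) • x₀ + riemannLiouville α (fun τ => f τ (ξ τ)) t

/-- The Bielecki-type weighted norm on `[0, T]`, for functions with values in a normed space;
`wnormT` is its case `ℝ^s`. Its value is the junk value `0` if the supremum is infinite. -/
noncomputable def bieleckiNorm {E : Type*} [NormedAddCommGroup E] (α γ T : ℝ) (ξ : ℝ → E) : ℝ :=
  ⨆ t : Set.Icc (0 : ℝ) T, (t : ℝ) ^ (1 - α) * ‖ξ t‖ / Real.exp (γ * t)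

section FractionalIntegral

variable {E : Type*} [NormedAddCommGroup E] [NormedSpace ℝ E] {α γ C t : ℝ} {g h : ℝ → E}

lemma norm_sub_rpow_smul_le (hα : α ≤ 1) (hγ : 0 ≤ γ) (hC : 0 ≤ C)
    (hg : ∀ τ ∈ Set.Ioc 0 t, ‖g τ‖ ≤ C * bieleckiWeight α γ τ) :
    ∀ τ ∈ Set.Ioc 0 t, ‖(t - τ) ^ (α - 1) • g τ‖ ≤
      C * (2 ^ (1 - α) * bieleckiWeight α γ t) *
        (bieleckiWeight α (-γ) τ + bieleckiWeight α (-γ) (t - τ)) := by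
  rintro τ ⟨hτ, hτt⟩
  have hker : 0 ≤ (t - τ) ^ (α - 1) := Real.rpow_nonneg (sub_nonneg.2 hτt) _
  calc ‖(t - τ) ^ (α - 1) • g τ‖
      = (t - τ) ^ (α - 1) * ‖g τ‖ := by rw [norm_smul, Real.norm_of_nonneg hker]
    _ ≤ (t - τ) ^ (α - 1) * (C * bieleckiWeight α γ τ) := by gcongr; exact hg τ ⟨hτ, hτt⟩
    _ = C * ((t - τ) ^ (α - 1) * bieleckiWeight α γ τ) := by ring
    _ ≤ C * (2 ^ (1 - α) * bieleckiWeight α γ t *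
          (bieleckiWeight α (-γ) τ + bieleckiWeight α (-γ) (t - τ))) :=
      mul_le_mul_of_nonneg_left (sub_rpow_mul_bieleckiWeight_le hα hγ hτ hτt) hC
    _ = _ := by ring

lemma intervalIntegrable_sub_rpow_smul (hα0 : 0 < α) (hα1 : α ≤ 1) (hγ : 0 ≤ γ) (hC : 0 ≤ C)
    (ht : 0 ≤ t) (hgm : AEStronglyMeasurable g (volume.restrict (Set.Ioc 0 t)))
    (hg : ∀ τ ∈ Set.Ioc 0 t, ‖g τ‖ ≤ C * bieleckiWeight α γ τ) :
    IntervalIntegrable (fun τ => (t - τ) ^ (α - 1) • g τ) volume 0 t := by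
  have hdom := (intervalIntegrable_bieleckiWeight_add_sub (γ := -γ) (t := t) hα0).const_mul
    (C * (2 ^ (1 - α) * bieleckiWeight α γ t))
  refine hdom.mono_fun' ?_ ?_ <;> rw [Set.uIoc_of_le ht]
  · exact ((measurable_const.sub measurable_id).pow_const _).aestronglyMeasurable.smul hgm
  · filter_upwards [ae_restrict_mem measurableSet_Ioc] with τ hτ
    exact norm_sub_rpow_smul_le hα1 hγ hC hg τ hτ

lemma norm_riemannLiouville_le (hα0 : 0 < α) (hα1 : α ≤ 1) (hγ : 0 < γ) (hC : 0 ≤ C)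
    (ht : 0 ≤ t) (hg : ∀ τ ∈ Set.Ioc 0 t, ‖g τ‖ ≤ C * bieleckiWeight α γ τ) :
    ‖riemannLiouville α g t‖ ≤ 2 ^ (2 - α) / γ ^ α * C * bieleckiWeight α γ t := by
  have hΓ : 0 < Real.Gamma α := Real.Gamma_pos_of_pos hα0
  have hw : 0 ≤ bieleckiWeight α γ t := bieleckiWeight_nonneg ht
  have hdom := (intervalIntegrable_bieleckiWeight_add_sub (γ := -γ) (t := t) hα0).const_mul
    (C * (2 ^ (1 - α) * bieleckiWeight α γ t))
  have hint : ‖∫ τ in 0..t, (t - τ) ^ (α - 1) • g τ‖ ≤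
      C * (2 ^ (1 - α) * bieleckiWeight α γ t) * (2 * (Real.Gamma α / γ ^ α)) := by
    refine (intervalIntegral.norm_integral_le_of_norm_le ht
      (.of_forall (norm_sub_rpow_smul_le hα1 hγ.le hC hg)) hdom).trans ?_
    rw [intervalIntegral.integral_const_mul]
    gcongr
    exact integral_bieleckiWeight_neg_add_sub_le hα0 hγ ht
  have htwo : (2 : ℝ) ^ (2 - α) = 2 * 2 ^ (1 - α) := by
    rw [← Real.rpow_one_add' zero_le_two (by linarith)]; ring_nf
  calc ‖riemannLiouville α g t‖
      = (Real.Gamma α)⁻¹ * ‖∫ τ in 0..t, (t - τ) ^ (α - 1) • g τ‖ := by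
        rw [riemannLiouville, norm_smul, Real.norm_of_nonneg (inv_nonneg.2 hΓ.le)]
    _ ≤ (Real.Gamma α)⁻¹ *
          (C * (2 ^ (1 - α) * bieleckiWeight α γ t) * (2 * (Real.Gamma α / γ ^ α))) := by gcongr
    _ = 2 ^ (2 - α) / γ ^ α * C * bieleckiWeight α γ t := by
        rw [htwo]; field_simp

lemma riemannLiouville_sub
    (hg : IntervalIntegrable (fun τ => (t - τ) ^ (α - 1) • g τ) volume 0 t)
    (hh : IntervalIntegrable (fun τ => (t - τ) ^ (α - 1) • h τ) volume 0 t) :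
    riemannLiouville α (fun τ => g τ - h τ) t =
      riemannLiouville α g t - riemannLiouville α h t := by
  simp only [riemannLiouville, smul_sub, intervalIntegral.integral_sub hg hh]

end FractionalIntegral

section WeightedSpace

variable {E : Type*} [NormedAddCommGroup E] {α γ T t : ℝ} {ξ : ℝ → E}

lemma bieleckiNorm_nonneg : 0 ≤ bieleckiNorm α γ T ξ :=
  Real.iSup_nonneg fun t =>
    div_nonneg (mul_nonneg (Real.rpow_nonneg t.2.1 _) (norm_nonneg _)) (Real.exp_pos _).le

lemma norm_le_bieleckiNorm_mul
    (hξ : BddAbove (Set.range fun t : Set.Icc (0 : ℝ) T =>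
      (t : ℝ) ^ (1 - α) * ‖ξ t‖ / Real.exp (γ * t)))
    (ht : t ∈ Set.Ioc 0 T) : ‖ξ t‖ ≤ bieleckiNorm α γ T ξ * bieleckiWeight α γ t := by
  rw [← div_le_iff₀ (bieleckiWeight_pos ht.1), ← rpow_mul_div_exp_eq_div_bieleckiWeight ht.1]
  exact le_ciSup hξ ⟨t, ht.1.le, ht.2⟩

lemma exists_norm_le_of_continuousOn_Ioc_of_tendsto {a b : ℝ} {l : E}
    (hξ : ContinuousOn ξ (Set.Ioc a b)) (hl : Tendsto ξ (𝓝[>] a) (𝓝 l)) :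
    ∃ C, ∀ t ∈ Set.Ioc a b, ‖ξ t‖ ≤ C := by
  have hcont : ContinuousOn (Function.update ξ a l) (Set.Icc a b) := by
    rw [continuousOn_update_iff, Set.Icc_sdiff_left]
    exact ⟨hξ, fun _ => hl.mono_left (nhdsWithin_mono _ Set.Ioc_subset_Ioi_self)⟩
  obtain ⟨C, hC⟩ := isCompact_Icc.exists_bound_of_continuousOn hcont
  refine ⟨C, fun t ht => ?_⟩
  simpa only [Function.update_of_ne ht.1.ne'] using hC t (Set.Ioc_subset_Icc_self ht)

variable [NormedSpace ℝ E]

lemma exists_norm_le_mul_bieleckiWeight (γ : ℝ) (hξ : ContinuousOn ξ (Set.Ioc 0 T))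
    (hlim : ∃ l, Tendsto (fun t => t ^ (1 - α) • ξ t) (𝓝[>] 0) (𝓝 l)) :
    ∃ C, 0 ≤ C ∧ ∀ t ∈ Set.Ioc 0 T, ‖ξ t‖ ≤ C * bieleckiWeight α γ t := by
  obtain ⟨l, hl⟩ := hlim
  have hcont : ContinuousOn (fun t => Real.exp (-(γ * t)) • t ^ (1 - α) • ξ t) (Set.Ioc 0 T) := by
    have hrpow : ContinuousOn (fun t : ℝ => t ^ (1 - α)) (Set.Ioc 0 T) :=
      continuousOn_id.rpow_const fun t ht => .inl ht.1.ne'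
    fun_prop
  have hexp : Tendsto (fun t : ℝ => Real.exp (-(γ * t))) (𝓝[>] 0) (𝓝 (Real.exp (-(γ * 0)))) :=
    (Continuous.tendsto (by fun_prop) 0).mono_left nhdsWithin_le_nhds
  obtain ⟨C, hC⟩ := exists_norm_le_of_continuousOn_Ioc_of_tendsto hcont (hexp.smul hl)
  refine ⟨max C 0, le_max_right _ _, fun t ht => ?_⟩
  rw [← div_le_iff₀ (bieleckiWeight_pos ht.1), ← rpow_mul_div_exp_eq_div_bieleckiWeight ht.1]
  calc t ^ (1 - α) * ‖ξ t‖ / Real.exp (γ * t)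
      = ‖Real.exp (-(γ * t)) • t ^ (1 - α) • ξ t‖ := by
        rw [norm_smul, norm_smul, Real.norm_of_nonneg (Real.exp_pos _).le,
          Real.norm_of_nonneg (Real.rpow_nonneg ht.1.le _), Real.exp_neg, div_eq_inv_mul]
    _ ≤ max C 0 := (hC t ht).trans (le_max_left _ _)

lemma bddAbove_range_bielecki (hξ : ContinuousOn ξ (Set.Ioc 0 T))
    (hlim : ∃ l, Tendsto (fun t => t ^ (1 - α) • ξ t) (𝓝[>] 0) (𝓝 l)) :
    BddAbove (Set.range fun t : Set.Icc (0 : ℝ) T =>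
      (t : ℝ) ^ (1 - α) * ‖ξ t‖ / Real.exp (γ * t)) := by
  obtain ⟨C, -, hC⟩ := exists_norm_le_mul_bieleckiWeight γ hξ hlim
  refine ⟨max C ((0 : ℝ) ^ (1 - α) * ‖ξ 0‖ / Real.exp (γ * 0)), ?_⟩
  rintro _ ⟨⟨t, ht0, htT⟩, rfl⟩
  dsimp only
  rcases ht0.eq_or_lt with rfl | ht
  · exact le_max_right _ _
  · refine le_max_of_le_left ?_
    rw [rpow_mul_div_exp_eq_div_bieleckiWeight ht, div_le_iff₀ (bieleckiWeight_pos ht)]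
    exact hC t ⟨ht, htT⟩

end WeightedSpace

section Contraction

variable {E : Type*} [NormedAddCommGroup E] [NormedSpace ℝ E] {α γ T t : ℝ} {f : ℝ → E → E}
  {K : ℝ≥0} {ξ ξ' : ℝ → E}

lemma exists_norm_comp_le_mul_bieleckiWeight (hα : α ≤ 1) (γ : ℝ)
    (hf : ContinuousOn (fun p : ℝ × E => f p.1 p.2) (Set.Ici 0 ×ˢ Set.univ))
    (hLip : ∀ t ∈ Set.Ioc 0 T, LipschitzWith K (f t)) (hξ : ContinuousOn ξ (Set.Ioc 0 T))
    (hlim : ∃ l, Tendsto (fun t => t ^ (1 - α) • ξ t) (𝓝[>] 0) (𝓝 l)) :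
    ∃ C, 0 ≤ C ∧ ∀ t ∈ Set.Ioc 0 T, ‖f t (ξ t)‖ ≤ C * bieleckiWeight α γ t := by
  have hf0 : ContinuousOn (fun t => f t 0) (Set.Ici 0) :=
    hf.comp (continuousOn_id.prodMk continuousOn_const) fun t ht => ⟨ht, trivial⟩
  have hf0lim : Tendsto (fun t => t ^ (1 - α) • f t 0) (𝓝[>] 0) (𝓝 ((0 : ℝ) ^ (1 - α) • f 0 0)) :=
    ((Real.continuousAt_rpow_const 0 _ (.inr (sub_nonneg.2 hα))).mono_left
      nhdsWithin_le_nhds).smul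
      ((hf0 0 Set.self_mem_Ici).mono_left (nhdsWithin_mono _ Set.Ioi_subset_Ici_self))
  obtain ⟨B, hB0, hB⟩ := exists_norm_le_mul_bieleckiWeight γ
    (hf0.mono (Set.Ioc_subset_Icc_self.trans Set.Icc_subset_Ici_self)) ⟨_, hf0lim⟩
  obtain ⟨C, hC0, hC⟩ := exists_norm_le_mul_bieleckiWeight γ hξ hlim
  refine ⟨K * C + B, by positivity, fun t ht => ?_⟩
  calc ‖f t (ξ t)‖ ≤ ‖f t (ξ t) - f t 0‖ + ‖f t 0‖ := norm_le_norm_sub_add _ _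
    _ ≤ K * ‖ξ t - 0‖ + ‖f t 0‖ := by gcongr; exact (hLip t ht).norm_sub_le _ _
    _ ≤ K * (C * bieleckiWeight α γ t) + B * bieleckiWeight α γ t := by
      rw [sub_zero]; gcongr
      exacts [hC t ht, hB t ht]
    _ = (K * C + B) * bieleckiWeight α γ t := by ring

lemma intervalIntegrable_sub_rpow_smul_comp (hα0 : 0 < α) (hα1 : α ≤ 1)
    (hf : ContinuousOn (fun p : ℝ × E => f p.1 p.2) (Set.Ici 0 ×ˢ Set.univ))
    (hLip : ∀ t ∈ Set.Ioc 0 T, LipschitzWith K (f t)) (hξ : ContinuousOn ξ (Set.Ioc 0 T))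
    (hlim : ∃ l, Tendsto (fun t => t ^ (1 - α) • ξ t) (𝓝[>] 0) (𝓝 l)) (ht : t ∈ Set.Ioc 0 T) :
    IntervalIntegrable (fun τ => (t - τ) ^ (α - 1) • f τ (ξ τ)) volume 0 t := by
  have hsub : Set.Ioc 0 t ⊆ Set.Ioc 0 T := Set.Ioc_subset_Ioc_right ht.2
  have hcomp : ContinuousOn (fun τ => f τ (ξ τ)) (Set.Ioc 0 t) :=
    hf.comp (continuousOn_id.prodMk (hξ.mono hsub)) fun τ hτ => ⟨hτ.1.le, trivial⟩
  obtain ⟨C, hC0, hC⟩ := exists_norm_comp_le_mul_bieleckiWeight hα1 0 hf hLip hξ hlim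
  exact intervalIntegrable_sub_rpow_smul hα0 hα1 le_rfl hC0 ht.1.le
    (hcomp.aestronglyMeasurable measurableSet_Ioc) fun τ hτ => hC τ (hsub hτ)

lemma norm_fractionalPicard_sub_le {C : ℝ} (hα0 : 0 < α) (hα1 : α ≤ 1) (hγ : 0 < γ) (hC : 0 ≤ C)
    (ht : 0 ≤ t) (hLip : ∀ τ ∈ Set.Ioc 0 t, LipschitzWith K (f τ)) (x₀ : E)
    (hξ : IntervalIntegrable (fun τ => (t - τ) ^ (α - 1) • f τ (ξ τ)) volume 0 t)
    (hξ' : IntervalIntegrable (fun τ => (t - τ) ^ (α - 1) • f τ (ξ' τ)) volume 0 t)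
    (hsub : ∀ τ ∈ Set.Ioc 0 t, ‖ξ τ - ξ' τ‖ ≤ C * bieleckiWeight α γ τ) :
    ‖fractionalPicard α f x₀ ξ t - fractionalPicard α f x₀ ξ' t‖ ≤
      K * 2 ^ (2 - α) / γ ^ α * C * bieleckiWeight α γ t := by
  have hfsub : ∀ τ ∈ Set.Ioc 0 t, ‖f τ (ξ τ) - f τ (ξ' τ)‖ ≤ K * C * bieleckiWeight α γ τ := by
    intro τ hτ
    calc ‖f τ (ξ τ) - f τ (ξ' τ)‖ ≤ K * ‖ξ τ - ξ' τ‖ := (hLip τ hτ).norm_sub_le _ _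
      _ ≤ K * (C * bieleckiWeight α γ τ) := by gcongr; exact hsub τ hτ
      _ = K * C * bieleckiWeight α γ τ := by ring
  rw [fractionalPicard, fractionalPicard, add_sub_add_left_eq_sub, ← riemannLiouville_sub hξ hξ']
  exact (norm_riemannLiouville_le hα0 hα1 hγ (mul_nonneg K.coe_nonneg hC) ht hfsub).trans_eq
    (by ring)

theorem stmt7_general (hα0 : 0 < α) (hα1 : α ≤ 1) (hγ : 0 < γ)
    (hLip : ∀ t ∈ Set.Ioc 0 T, LipschitzWith K (f t)) (x₀ : E)
    (hξ : ∀ t ∈ Set.Ioc 0 T,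
      IntervalIntegrable (fun τ => (t - τ) ^ (α - 1) • f τ (ξ τ)) volume 0 t)
    (hξ' : ∀ t ∈ Set.Ioc 0 T,
      IntervalIntegrable (fun τ => (t - τ) ^ (α - 1) • f τ (ξ' τ)) volume 0 t)
    (hbdd : BddAbove (Set.range fun t : Set.Icc (0 : ℝ) T =>
      (t : ℝ) ^ (1 - α) * ‖ξ t - ξ' t‖ / Real.exp (γ * t))) :
    (∀ t ∈ Set.Icc (0 : ℝ) T,
      t ^ (1 - α) * ‖fractionalPicard α f x₀ ξ t - fractionalPicard α f x₀ ξ' t‖ /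
          Real.exp (γ * t) ≤
        K * 2 ^ (2 - α) / γ ^ α * bieleckiNorm α γ T (fun u => ξ u - ξ' u)) ∧
    bieleckiNorm α γ T (fun u => fractionalPicard α f x₀ ξ u - fractionalPicard α f x₀ ξ' u) ≤
      K * 2 ^ (2 - α) / γ ^ α * bieleckiNorm α γ T (fun u => ξ u - ξ' u) := by
  have hnorm : 0 ≤ bieleckiNorm α γ T (fun u => ξ u - ξ' u) := bieleckiNorm_nonneg
  have hrhs : 0 ≤ K * 2 ^ (2 - α) / γ ^ α * bieleckiNorm α γ T (fun u => ξ u - ξ' u) := by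
    positivity
  suffices hpt : ∀ t ∈ Set.Icc (0 : ℝ) T,
      t ^ (1 - α) * ‖fractionalPicard α f x₀ ξ t - fractionalPicard α f x₀ ξ' t‖ /
          Real.exp (γ * t) ≤
        K * 2 ^ (2 - α) / γ ^ α * bieleckiNorm α γ T (fun u => ξ u - ξ' u) from
    ⟨hpt, Real.iSup_le (fun t => hpt t t.2) hrhs⟩
  rintro t ⟨ht0, htT⟩
  rcases ht0.eq_or_lt with rfl | ht
  · simpa [fractionalPicard, riemannLiouville] using hrhs
  · have hsub : Set.Ioc 0 t ⊆ Set.Ioc 0 T := Set.Ioc_subset_Ioc_right htT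
    rw [rpow_mul_div_exp_eq_div_bieleckiWeight ht, div_le_iff₀ (bieleckiWeight_pos ht)]
    exact norm_fractionalPicard_sub_le hα0 hα1 hγ hnorm ht0 (fun τ hτ => hLip τ (hsub hτ)) x₀
      (hξ t ⟨ht, htT⟩) (hξ' t ⟨ht, htT⟩) fun τ hτ =>
        norm_le_bieleckiNorm_mul (ξ := fun u => ξ u - ξ' u) hbdd (hsub hτ)

end Contraction

lemma memC_sub {α T : ℝ} {s : ℕ} {ξ ξ' : ℝ → Fin s → ℝ} (hξ : memC α T ξ) (hξ' : memC α T ξ') :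
    memC α T (fun u => ξ u - ξ' u) := by
  obtain ⟨hcont, l, hl⟩ := hξ
  obtain ⟨hcont', l', hl'⟩ := hξ'
  exact ⟨hcont.sub hcont', l - l', by simpa only [smul_sub] using hl.sub hl'⟩

lemma lipschitzWith_of_norm_sub_le_iSup {E F ι : Type*} [SeminormedAddCommGroup E]
    [SeminormedAddCommGroup F] {f : ι → E → F} {L : ι → ℝ} (hL : BddAbove (Set.range L))
    (hL0 : 0 ≤ ⨆ i, L i) (hf : ∀ i x y, ‖f i x - f i y‖ ≤ L i * ‖x - y‖) (i : ι) :
    LipschitzWith ⟨⨆ i, L i, hL0⟩ (f i) :=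
  .of_dist_le_mul fun x y => by
    rw [dist_eq_norm, dist_eq_norm]
    exact (hf i x y).trans (mul_le_mul_of_nonneg_right (le_ciSup hL i) (norm_nonneg _))

theorem stmt7 (α T : ℝ) (hα0 : 0 < α) (hα1 : α < 1) (hT : 0 < T) (s : ℕ)
    (f : ℝ → (Fin s → ℝ) → (Fin s → ℝ))
    (hfc : ContinuousOn (fun p : ℝ × (Fin s → ℝ) => f p.1 p.2)
      (Set.Ici 0 ×ˢ (Set.univ : Set (Fin s → ℝ))))
    (L : ℝ → ℝ) (hL0 : ∀ t : ℝ, 0 ≤ t → 0 ≤ L t) (hLbd : ∃ C : ℝ, ∀ t : ℝ, 0 ≤ t → L t ≤ C)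
    (hLip : ∀ t : ℝ, 0 ≤ t → ∀ x y : Fin s → ℝ, ‖f t x - f t y‖ ≤ L t * ‖x - y‖)
    (x₀ : Fin s → ℝ) (γ : ℝ) (hγ : 0 < γ)
    (ξ ξ' : ℝ → (Fin s → ℝ)) (hξ : memC α T ξ) (hξ' : memC α T ξ') :
    (∀ t ∈ Set.Icc (0:ℝ) T,
      t ^ (1 - α) * ‖Tmap α f x₀ ξ t - Tmap α f x₀ ξ' t‖ / Real.exp (γ * t)
        ≤ (⨆ u : Set.Icc (0:ℝ) T, L u) * 2 ^ (2 - α) / γ ^ α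
            * wnormT α γ T (fun u => ξ u - ξ' u)) ∧
    wnormT α γ T (fun u => Tmap α f x₀ ξ u - Tmap α f x₀ ξ' u)
      ≤ (⨆ u : Set.Icc (0:ℝ) T, L u) * 2 ^ (2 - α) / γ ^ α
          * wnormT α γ T (fun u => ξ u - ξ' u) := by
  have hsup : 0 ≤ ⨆ u : Set.Icc (0:ℝ) T, L u := Real.iSup_nonneg fun u => hL0 u u.2.1
  have hbdd : BddAbove (Set.range fun u : Set.Icc (0:ℝ) T => L u) :=
    hLbd.imp fun C hC => Set.forall_mem_range.2 fun u => hC u u.2.1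
  have hLipSup : ∀ t ∈ Set.Ioc 0 T, LipschitzWith ⟨⨆ u : Set.Icc (0:ℝ) T, L u, hsup⟩ (f t) :=
    fun t ht => lipschitzWith_of_norm_sub_le_iSup hbdd hsup
      (fun u => hLip u u.2.1) ⟨t, Set.Ioc_subset_Icc_self ht⟩
  have hsub : memC α T (fun u => ξ u - ξ' u) := memC_sub hξ hξ'
  exact stmt7_general hα0 hα1.le hγ hLipSup x₀
    (fun _ => intervalIntegrable_sub_rpow_smul_comp hα0 hα1.le hfc hLipSup hξ.1 hξ.2)
    (fun _ => intervalIntegrable_sub_rpow_smul_comp hα0 hα1.le hfc hLipSup hξ'.1 hξ'.2)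
    (bddAbove_range_bielecki hsub.1 hsub.2)
end

section
/- Let 0 < α < 1, T > 0, let f : [0,∞) × ℝ^s → ℝ^s be continuous with ‖f(t,x) − f(t,y)‖ ≤ L(t)‖x−y‖ for a bounded nonnegative L, and let ξ ∈ C_{1-α}([0,T], ℝ^s). Then for every t ∈ (0,T], t^{1-α} ∫₀^t (t-τ)^{α-1} ‖f(τ, ξ(τ))‖ dτ ≤ L̄ t^α B(α,α) ‖ξ‖_{1-α,T} + (sup_{u∈[0,T]} ‖f(u,0)‖) t / α, where L̄ := sup_{u∈[0,T]} L(u), ‖ξ‖_{1-α,T} := sup_{u∈[0,T]} u^{1-α}‖ξ(u)‖, and B(α,α) is the Beta function. Consequently lim_{t→0⁺} t^{1-α} ∫₀^t (t-τ)^{α-1} f(τ,ξ(τ)) dτ = 0. -/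
open Filter Topology MeasureTheory

/-!
If `‖ξ τ‖ ≤ N τ ^ (β - 1)`, the Lipschitz condition gives `‖f τ (ξ τ)‖ ≤ L̄ N τ ^ (β - 1) + M`
with `L̄ = sup L` and `M = sup ‖f u 0‖`. Integrating this against the kernel `(t - τ) ^ (α - 1)`
gives `L̄ N t ^ (α + β - 1) B(α, β) + M t ^ α / α`. After multiplication by `t ^ (1 - β)` the powers
of `t` are `t ^ α` and `t ^ (1 + α - β)`, which tend to zero with `t` if `β < 1 + α`. The theorem
is the case `β = α`.
-/

open Asymptotics ProbabilityTheory

section Kernel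

variable {α β t : ℝ}

lemma integral_sub_rpow_mul_rpow (hα : 0 < α) (hβ : 0 < β) (ht : 0 < t) :
    ∫ τ in (0 : ℝ)..t, (t - τ) ^ (α - 1) * τ ^ (β - 1) = t ^ (α + β - 1) * beta α β := by
  have integrand_eq : ∀ τ ∈ Set.uIcc 0 t, (((t - τ) ^ (α - 1) * τ ^ (β - 1) : ℝ) : ℂ) =
      (τ : ℂ) ^ ((β : ℂ) - 1) * ((t : ℂ) - τ) ^ ((α : ℂ) - 1) := by
    intro τ hτ
    rw [Set.uIcc_of_le ht.le] at hτ
    rw [mul_comm, Complex.ofReal_mul, Complex.ofReal_cpow hτ.1,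
      Complex.ofReal_cpow (sub_nonneg.2 hτ.2)]
    push_cast
    rfl
  apply Complex.ofReal_injective
  rw [← intervalIntegral.integral_ofReal, intervalIntegral.integral_congr integrand_eq,
    Complex.betaIntegral_scaled _ _ ht,
    Complex.betaIntegral_eq_Gamma_mul_div _ _ (by simpa using hβ) (by simpa using hα), beta,
    Complex.ofReal_mul, Complex.ofReal_cpow ht.le]
  simp only [Complex.ofReal_div, Complex.ofReal_mul, ← Complex.Gamma_ofReal]
  push_cast
  rw [add_comm (β : ℂ), mul_comm (Complex.Gamma β)]

lemma intervalIntegrable_sub_rpow_mul_rpow (hα : 0 < α) (hβ : 0 < β) (ht : 0 < t) :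
    IntervalIntegrable (fun τ => (t - τ) ^ (α - 1) * τ ^ (β - 1)) volume 0 t := by
  apply intervalIntegral.intervalIntegrable_of_integral_ne_zero
  rw [integral_sub_rpow_mul_rpow hα hβ ht]
  exact (mul_pos (Real.rpow_pos_of_pos ht _) (beta_pos hα hβ)).ne'

lemma integral_sub_rpow (hα : 0 < α) : ∫ τ in (0 : ℝ)..t, (t - τ) ^ (α - 1) = t ^ α / α := by
  rw [intervalIntegral.integral_comp_sub_left (fun x => x ^ (α - 1)) t,
    integral_rpow (Or.inl (by linarith))]
  simp [Real.zero_rpow hα.ne']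

lemma intervalIntegrable_sub_rpow (hα : 0 < α) :
    IntervalIntegrable (fun τ => (t - τ) ^ (α - 1)) volume 0 t := by
  have h := (intervalIntegral.intervalIntegrable_rpow' (a := t) (b := 0)
    (show -1 < α - 1 by linarith)).comp_sub_left t
  rwa [sub_self, sub_zero] at h

variable {F : Type*} [NormedAddCommGroup F] [NormedSpace ℝ F] {g : ℝ → F} {A M : ℝ}

lemma norm_integral_sub_rpow_smul_le (hα : 0 < α) (hβ : 0 < β) (ht : 0 < t)
    (hg : ∀ τ ∈ Set.Ioc 0 t, ‖g τ‖ ≤ A * τ ^ (β - 1) + M) :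
    ‖∫ τ in (0 : ℝ)..t, (t - τ) ^ (α - 1) • g τ‖ ≤
      A * (t ^ (α + β - 1) * beta α β) + M * (t ^ α / α) := by
  have singular_int := (intervalIntegrable_sub_rpow_mul_rpow hα hβ ht).const_mul A
  have kernel_int := (intervalIntegrable_sub_rpow (t := t) hα).const_mul M
  have integrand_le : ∀ τ ∈ Set.Ioc 0 t, ‖(t - τ) ^ (α - 1) • g τ‖ ≤
      A * ((t - τ) ^ (α - 1) * τ ^ (β - 1)) + M * (t - τ) ^ (α - 1) := by
    intro τ hτ
    have kernel_nonneg : 0 ≤ (t - τ) ^ (α - 1) := Real.rpow_nonneg (sub_nonneg.2 hτ.2) _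
    calc ‖(t - τ) ^ (α - 1) • g τ‖ = (t - τ) ^ (α - 1) * ‖g τ‖ := by
          rw [norm_smul, Real.norm_of_nonneg kernel_nonneg]
      _ ≤ (t - τ) ^ (α - 1) * (A * τ ^ (β - 1) + M) := by gcongr; exact hg τ hτ
      _ = _ := by ring
  refine (intervalIntegral.norm_integral_le_of_norm_le ht.le (.of_forall integrand_le)
    (singular_int.add kernel_int)).trans_eq ?_
  rw [intervalIntegral.integral_add singular_int kernel_int, intervalIntegral.integral_const_mul,
    intervalIntegral.integral_const_mul, integral_sub_rpow_mul_rpow hα hβ ht, integral_sub_rpow hα]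

lemma rpow_mul_norm_integral_sub_rpow_smul_le (hα : 0 < α) (hβ : 0 < β) (ht : 0 < t)
    (hg : ∀ τ ∈ Set.Ioc 0 t, ‖g τ‖ ≤ A * τ ^ (β - 1) + M) :
    t ^ (1 - β) * ‖∫ τ in (0 : ℝ)..t, (t - τ) ^ (α - 1) • g τ‖ ≤
      A * t ^ α * beta α β + M * t ^ (1 + α - β) / α := by
  have singular_exponent : t ^ (1 - β) * t ^ (α + β - 1) = t ^ α := by
    rw [← Real.rpow_add ht]; ring_nf
  have kernel_exponent : t ^ (1 - β) * t ^ α = t ^ (1 + α - β) := by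
    rw [← Real.rpow_add ht]; ring_nf
  calc t ^ (1 - β) * ‖∫ τ in (0 : ℝ)..t, (t - τ) ^ (α - 1) • g τ‖
      ≤ t ^ (1 - β) * (A * (t ^ (α + β - 1) * beta α β) + M * (t ^ α / α)) := by
        gcongr; exact norm_integral_sub_rpow_smul_le hα hβ ht hg
    _ = A * (t ^ (1 - β) * t ^ (α + β - 1)) * beta α β + M * (t ^ (1 - β) * t ^ α) / α := by ring
    _ = A * t ^ α * beta α β + M * t ^ (1 + α - β) / α := by
        rw [singular_exponent, kernel_exponent]

lemma tendsto_rpow_nhdsGT_zero {r : ℝ} (hr : 0 < r) :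
    Tendsto (fun t : ℝ => t ^ r) (𝓝[>] 0) (𝓝 0) := by
  have h := (Real.continuousAt_rpow_const 0 r (Or.inr hr.le)).tendsto
  rw [Real.zero_rpow hr.ne'] at h
  exact h.mono_left nhdsWithin_le_nhds

lemma tendsto_rpow_smul_integral_sub_rpow_smul {T : ℝ} (hα : 0 < α) (hβ : 0 < β)
    (hβα : β < 1 + α) (hT : 0 < T) (hg : ∀ τ ∈ Set.Ioc 0 T, ‖g τ‖ ≤ A * τ ^ (β - 1) + M) :
    Tendsto (fun t => t ^ (1 - β) • ∫ τ in (0 : ℝ)..t, (t - τ) ^ (α - 1) • g τ)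
      (𝓝[>] 0) (𝓝 0) := by
  have bound_tendsto : Tendsto (fun t => A * t ^ α * beta α β + M * t ^ (1 + α - β) / α)
      (𝓝[>] 0) (𝓝 0) := by
    simpa using (((tendsto_rpow_nhdsGT_zero hα).const_mul A).mul_const (beta α β)).add
      (((tendsto_rpow_nhdsGT_zero (sub_pos.2 hβα)).const_mul M).div_const α)
  refine squeeze_zero_norm' ?_ bound_tendsto
  filter_upwards [Ioc_mem_nhdsGT hT] with t ht
  rw [norm_smul, Real.norm_of_nonneg (Real.rpow_nonneg ht.1.le _)]
  exact rpow_mul_norm_integral_sub_rpow_smul_le hα hβ ht.1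
    fun τ hτ => hg τ (Set.Ioc_subset_Ioc_right ht.2 hτ)

end Kernel

section Weighted

variable {E F : Type*} [NormedAddCommGroup E] [NormedAddCommGroup F] {β T : ℝ} {ξ : ℝ → E}

lemma rpow_one_sub_mul_rpow_sub_one {t : ℝ} (ht : 0 < t) (β : ℝ) :
    t ^ (1 - β) * t ^ (β - 1) = 1 := by
  rw [← Real.rpow_add ht]; simp

lemma bddAbove_rpow_mul_norm_image_Icc (hξ : ContinuousOn ξ (Set.Ioc 0 T))
    (hξO : ξ =O[𝓝[>] 0] fun t => t ^ (β - 1)) :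
    BddAbove ((fun u => u ^ (1 - β) * ‖ξ u‖) '' Set.Icc 0 T) := by
  obtain ⟨C, hC⟩ := hξO.bound
  obtain ⟨δ, hδ : 0 < δ, hδC⟩ := mem_nhdsGT_iff_exists_Ioo_subset.1 hC
  have bdd_near_zero : BddAbove ((fun u => u ^ (1 - β) * ‖ξ u‖) '' Set.Ioo 0 δ) := by
    refine ⟨C, Set.forall_mem_image.2 fun u hu => ?_⟩
    have hu0 := hu.1
    have hξu : ‖ξ u‖ ≤ C * u ^ (β - 1) := by
      simpa only [Set.mem_ofPred_eq, Real.norm_of_nonneg (Real.rpow_nonneg hu0.le _)] using hδC hu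
    calc u ^ (1 - β) * ‖ξ u‖ ≤ u ^ (1 - β) * (C * u ^ (β - 1)) := by gcongr
      _ = C := by rw [mul_left_comm, rpow_one_sub_mul_rpow_sub_one hu0, mul_one]
  have bdd_away_from_zero : BddAbove ((fun u => u ^ (1 - β) * ‖ξ u‖) '' Set.Icc δ T) := by
    refine isCompact_Icc.bddAbove_image (ContinuousOn.mul ?_ ?_)
    · exact continuousOn_id.rpow_const fun u hu => Or.inl (hδ.trans_le hu.1).ne'
    · exact (hξ.mono fun u hu => ⟨hδ.trans_le hu.1, hu.2⟩).norm
  have cover : Set.Icc 0 T ⊆ insert 0 (Set.Ioo 0 δ ∪ Set.Icc δ T) := by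
    rintro u ⟨hu0, huT⟩
    rcases hu0.eq_or_lt with rfl | hu
    · exact Set.mem_insert _ _
    · exact Or.inr ((lt_or_ge u δ).imp (fun h => ⟨hu, h⟩) fun h => ⟨h, huT⟩)
  refine BddAbove.mono (Set.image_mono cover) ?_
  rw [Set.image_insert_eq, Set.image_union]
  exact (bdd_near_zero.union bdd_away_from_zero).insert _

lemma norm_apply_le_iSup_mul_rpow_add_iSup {f : ℝ → E → F} {L : ℝ → ℝ}
    (hL0 : ∀ t ∈ Set.Icc 0 T, 0 ≤ L t) (hL : BddAbove (L '' Set.Icc 0 T))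
    (hLip : ∀ t ∈ Set.Icc 0 T, ∀ x y, ‖f t x - f t y‖ ≤ L t * ‖x - y‖)
    (hf0 : BddAbove ((fun u => ‖f u 0‖) '' Set.Icc 0 T))
    (hξ : BddAbove ((fun u => u ^ (1 - β) * ‖ξ u‖) '' Set.Icc 0 T))
    {τ : ℝ} (hτ : τ ∈ Set.Ioc 0 T) :
    ‖f τ (ξ τ)‖ ≤
      (⨆ u : Set.Icc 0 T, L u) * (⨆ u : Set.Icc 0 T, (u : ℝ) ^ (1 - β) * ‖ξ u‖) * τ ^ (β - 1)
        + ⨆ u : Set.Icc 0 T, ‖f u 0‖ := by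
  have hτT := Set.Ioc_subset_Icc_self hτ
  have hLτ : L τ ≤ ⨆ u : Set.Icc 0 T, L u := le_ciSup_set hL hτT
  have hξτ : ‖ξ τ‖ ≤ (⨆ u : Set.Icc 0 T, (u : ℝ) ^ (1 - β) * ‖ξ u‖) * τ ^ (β - 1) := by
    calc ‖ξ τ‖ = τ ^ (1 - β) * ‖ξ τ‖ * τ ^ (β - 1) := by
          rw [mul_right_comm, rpow_one_sub_mul_rpow_sub_one hτ.1, one_mul]
      _ ≤ _ := mul_le_mul_of_nonneg_right (le_ciSup_set hξ hτT) (Real.rpow_nonneg hτ.1.le _)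
  calc ‖f τ (ξ τ)‖ ≤ ‖f τ (ξ τ) - f τ 0‖ + ‖f τ 0‖ := norm_le_norm_sub_add _ _
    _ ≤ L τ * ‖ξ τ‖ + ‖f τ 0‖ := by gcongr; simpa using hLip τ hτT (ξ τ) 0
    _ ≤ _ := add_le_add (mul_le_mul hLτ hξτ (norm_nonneg _) ((hL0 τ hτT).trans hLτ))
        (le_ciSup_set hf0 hτT)
    _ = _ := by rw [mul_assoc]

end Weighted

lemma memC.isBigO {α T : ℝ} {s : ℕ} {ξ : ℝ → (Fin s → ℝ)} (hξ : memC α T ξ) :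
    ξ =O[𝓝[>] 0] fun t => t ^ (α - 1) := by
  obtain ⟨-, l, hl⟩ := hξ
  have weighted := (isBigO_refl (fun t : ℝ => t ^ (α - 1)) (𝓝[>] 0)).smul (hl.isBigO_one ℝ)
  refine weighted.congr' ?_ (.of_forall fun t => mul_one _)
  filter_upwards [self_mem_nhdsWithin] with t ht
  rw [smul_smul, mul_comm, rpow_one_sub_mul_rpow_sub_one ht, one_smul]

theorem stmt8_general {E F : Type*} [NormedAddCommGroup E] [NormedAddCommGroup F]
    [NormedSpace ℝ F] [CompleteSpace F] {α β T : ℝ} (hα : 0 < α) (hβ : 0 < β) (hβα : β < 1 + α)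
    (hT : 0 < T) {f : ℝ → E → F}
    (hfc : ContinuousOn (fun p : ℝ × E => f p.1 p.2) (Set.Icc 0 T ×ˢ Set.univ))
    {L : ℝ → ℝ} (hL0 : ∀ t ∈ Set.Icc 0 T, 0 ≤ L t) (hL : BddAbove (L '' Set.Icc 0 T))
    (hLip : ∀ t ∈ Set.Icc 0 T, ∀ x y, ‖f t x - f t y‖ ≤ L t * ‖x - y‖)
    {ξ : ℝ → E} (hξ : ContinuousOn ξ (Set.Ioc 0 T))
    (hξO : ξ =O[𝓝[>] 0] fun t => t ^ (β - 1)) :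
    (∀ t ∈ Set.Ioc 0 T,
      t ^ (1 - β) * ∫ τ in (0 : ℝ)..t, (t - τ) ^ (α - 1) * ‖f τ (ξ τ)‖
        ≤ (⨆ u : Set.Icc 0 T, L u) * t ^ α * beta α β
            * (⨆ u : Set.Icc 0 T, (u : ℝ) ^ (1 - β) * ‖ξ u‖)
          + (⨆ u : Set.Icc 0 T, ‖f u 0‖) * t ^ (1 + α - β) / α) ∧
    Tendsto (fun t => t ^ (1 - β) • ∫ τ in (0 : ℝ)..t, (t - τ) ^ (α - 1) • f τ (ξ τ))
      (𝓝[>] 0) (𝓝 0) := by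
  have hf0 : BddAbove ((fun u => ‖f u 0‖) '' Set.Icc 0 T) :=
    isCompact_Icc.bddAbove_image
      (hfc.comp (f := fun u => (u, (0 : E))) (by fun_prop) fun u hu => ⟨hu, trivial⟩).norm
  have pointwise_bound := fun τ (hτ : τ ∈ Set.Ioc 0 T) => norm_apply_le_iSup_mul_rpow_add_iSup
    hL0 hL hLip hf0 (bddAbove_rpow_mul_norm_image_Icc hξ hξO) hτ
  refine ⟨fun t ht => ?_, tendsto_rpow_smul_integral_sub_rpow_smul hα hβ hβα hT pointwise_bound⟩
  have weighted_bound := rpow_mul_norm_integral_sub_rpow_smul_le hα hβ ht.1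
    (g := fun τ => ‖f τ (ξ τ)‖) fun τ hτ => by
      simpa only [norm_norm] using pointwise_bound τ (Set.Ioc_subset_Ioc_right ht.2 hτ)
  refine (mul_le_mul_of_nonneg_left (Real.le_norm_self _) (Real.rpow_nonneg ht.1.le _)).trans
    (weighted_bound.trans_eq ?_)
  ring

theorem stmt8 (α T : ℝ) (hα0 : 0 < α) (hα1 : α < 1) (hT : 0 < T) (s : ℕ)
    (f : ℝ → (Fin s → ℝ) → (Fin s → ℝ))
    (hfc : ContinuousOn (fun p : ℝ × (Fin s → ℝ) => f p.1 p.2)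
      (Set.Ici 0 ×ˢ (Set.univ : Set (Fin s → ℝ))))
    (L : ℝ → ℝ) (hL0 : ∀ t : ℝ, 0 ≤ t → 0 ≤ L t) (hLbd : ∃ C : ℝ, ∀ t : ℝ, 0 ≤ t → L t ≤ C)
    (hLip : ∀ t : ℝ, 0 ≤ t → ∀ x y : Fin s → ℝ, ‖f t x - f t y‖ ≤ L t * ‖x - y‖)
    (ξ : ℝ → (Fin s → ℝ)) (hξ : memC α T ξ) :
    (∀ t ∈ Set.Ioc (0:ℝ) T,
      t ^ (1 - α) * ∫ τ in (0:ℝ)..t, (t - τ) ^ (α - 1) * ‖f τ (ξ τ)‖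
        ≤ (⨆ u : Set.Icc (0:ℝ) T, L u) * t ^ α
            * (Real.Gamma α * Real.Gamma α / Real.Gamma (2 * α))
            * (⨆ u : Set.Icc (0:ℝ) T, (u : ℝ) ^ (1 - α) * ‖ξ u‖)
          + (⨆ u : Set.Icc (0:ℝ) T, ‖f u 0‖) * t / α) ∧
    Tendsto (fun t : ℝ => t ^ (1 - α) • ∫ τ in (0:ℝ)..t, (t - τ) ^ (α - 1) • f τ (ξ τ))
      (𝓝[>] 0) (𝓝 0) := by
  obtain ⟨C, hC⟩ := hLbd
  simpa only [add_sub_cancel_right, Real.rpow_one, beta, ← two_mul] using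
    stmt8_general hα0 hα0 (by linarith) hT (hfc.mono (by gcongr; exact Set.Icc_subset_Ici_self))
      (fun t ht => hL0 t ht.1) ⟨C, Set.forall_mem_image.2 fun t ht => hC t ht.1⟩
      (fun t ht => hLip t ht.1) hξ.1 hξ.isBigO
end

section
/- Let 0 < α < 1, T > 0, let f : [0,∞) × ℝ^s → ℝ^s be continuous with ‖f(t,x) − f(t,y)‖ ≤ L(t)‖x−y‖ for a bounded nonnegative L, and let ξ ∈ C_{1-α}([0,T], ℝ^s). Then the function t ↦ ∫₀^t (t-τ)^{α-1} f(τ, ξ(τ)) dτ is continuous on (0,T]. -/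
open Filter Topology MeasureTheory

/-!
Only two properties of `g τ = f τ (ξ τ)` matter: it is continuous on `(0, T]` and integrable on it.
Integrability holds because `f` grows at most linearly in its second argument and
`ξ = O(t ^ (α - 1))` at `0`. Given a point `t₀ ∈ (0, T]`, split the integral at some `c ∈ (0, t₀)`.
On `[0, c]` the kernel is continuous in `(t, τ)` for `t > c`, while `g` is merely integrable. On
`[c, t]` the kernel is singular, while `g` is bounded, and the substitution `τ = c + (t - c) u`
moves the singularity to the fixed point `u = 1`. Both parts are then continuous by dominated
convergence.
-/

section KernelIntegrals

open Set

variable {E : Type*} [NormedAddCommGroup E] [NormedSpace ℝ E]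

theorem continuousOn_intervalIntegral_smul_of_continuousOn_uncurry {X : Type*} [TopologicalSpace X]
    [FirstCountableTopology X] {k : X → ℝ → ℝ} {S : Set X} {a b : ℝ} {g : ℝ → E}
    (hk : ContinuousOn (Function.uncurry k) (S ×ˢ uIcc a b))
    (hg : IntervalIntegrable g volume a b) :
    ContinuousOn (fun t => ∫ τ in a..b, k t τ • g τ) S := by
  intro t₀ ht₀
  have hk_left : ∀ t ∈ S, ContinuousOn (k t) (uIcc a b) := fun t ht => hk.uncurry_left t ht
  obtain ⟨M, hM⟩ := isCompact_uIcc.exists_bound_of_continuousOn (hk_left t₀ ht₀)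
  obtain ⟨v, hv, hv_close⟩ :=
    isCompact_uIcc.mem_uniformity_of_prod hk ht₀ (Metric.dist_mem_uniformity one_pos)
  refine intervalIntegral.continuousWithinAt_of_dominated_interval
    (bound := fun τ => (M + 1) * ‖g τ‖) ?_ ?_ (hg.norm.const_mul _) ?_
  · filter_upwards [self_mem_nhdsWithin] with t ht
    exact (hg.continuousOn_smul (hk_left t ht)).def'.aestronglyMeasurable
  · filter_upwards [hv] with t ht
    refine .of_forall fun τ hτ => ?_
    have hk_close : ‖k t τ - k t₀ τ‖ < 1 := by
      rw [← dist_eq_norm]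
      exact hv_close t ht τ (uIoc_subset_uIcc hτ)
    have hk_bound : ‖k t τ‖ ≤ M + 1 := by
      linarith [norm_le_norm_add_norm_sub' (k t τ) (k t₀ τ), hM τ (uIoc_subset_uIcc hτ)]
    rw [norm_smul]
    gcongr
  · refine .of_forall fun τ hτ => ?_
    exact (hk.uncurry_right τ (uIoc_subset_uIcc hτ) t₀ ht₀).smul continuousWithinAt_const

theorem continuousOn_uncurry_rpow_sub (p c : ℝ) :
    ContinuousOn (Function.uncurry fun t τ : ℝ => (t - τ) ^ p) (Ioi c ×ˢ Iic c) := by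
  refine ContinuousOn.rpow_const (by fun_prop) ?_
  rintro ⟨t, τ⟩ ⟨ht, hτ⟩
  exact Or.inl (sub_pos.2 (lt_of_le_of_lt hτ ht)).ne'

theorem intervalIntegrable_rpow_sub {p : ℝ} (hp : -1 < p) (a b t : ℝ) :
    IntervalIntegrable (fun τ => (t - τ) ^ p) volume a b := by
  have h_rpow : IntervalIntegrable (fun σ => σ ^ p) volume (t - a) (t - b) :=
    intervalIntegral.intervalIntegrable_rpow' hp
  simpa using h_rpow.comp_sub_left t

end KernelIntegrals

section AbelIntegral

open Set

variable {E : Type*} [NormedAddCommGroup E] [NormedSpace ℝ E] {α a b c t : ℝ} {g : ℝ → E}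

/-- The Abel integral of order `α` with base point `a`, i.e. the Riemann–Liouville fractional
integral of `g` without its normalising factor `1 / Γ(α)`. -/
noncomputable def abelIntegral (α a : ℝ) (g : ℝ → E) (t : ℝ) : E :=
  ∫ τ in a..t, (t - τ) ^ (α - 1) • g τ

theorem abelIntegral_eq_rpow_smul_integral_unitInterval (hα : α ≠ 0) (hat : a ≤ t) (g : ℝ → E) :
    abelIntegral α a g t =
      (t - a) ^ α • ∫ u in (0 : ℝ)..1, (1 - u) ^ (α - 1) • g (a + (t - a) * u) := by
  have h_subst : (t - a) • ∫ u in (0 : ℝ)..1,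
      (t - (a + (t - a) * u)) ^ (α - 1) • g (a + (t - a) * u) = abelIntegral α a g t := by
    simpa [abelIntegral] using intervalIntegral.smul_integral_comp_add_mul
      (fun τ => (t - τ) ^ (α - 1) • g τ) (a := 0) (b := 1) (t - a) a
  have hta : 0 ≤ t - a := sub_nonneg.2 hat
  have h_pow : (t - a) ^ α = (t - a) * (t - a) ^ (α - 1) := by
    rw [← Real.rpow_one_add' hta (by simpa using hα), add_sub_cancel]
  rw [← h_subst, h_pow, mul_smul, ← intervalIntegral.integral_smul ((t - a) ^ (α - 1))]
  congr 1
  refine intervalIntegral.integral_congr fun u hu => ?_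
  rw [uIcc_of_le zero_le_one] at hu
  have h_factor : t - (a + (t - a) * u) = (t - a) * (1 - u) := by ring
  simp only [h_factor, Real.mul_rpow hta (sub_nonneg.2 hu.2), mul_smul]

theorem continuousOn_abelIntegral_of_continuousOn_Icc (hα : 0 < α)
    (hg : ContinuousOn g (Icc a b)) : ContinuousOn (abelIntegral α a g) (Icc a b) := by
  refine ContinuousOn.congr ?_ fun t ht =>
    abelIntegral_eq_rpow_smul_integral_unitInterval hα.ne' ht.1 g
  refine ContinuousOn.smul (ContinuousOn.rpow_const (by fun_prop) fun _ _ => Or.inr hα.le) ?_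
  obtain ⟨M, hM⟩ := isCompact_Icc.exists_bound_of_continuousOn hg
  have h_kernel := intervalIntegrable_rpow_sub (p := α - 1) (by linarith) 0 1 1
  have h_mem : ∀ t ∈ Icc a b, ∀ u ∈ Icc (0 : ℝ) 1, a + (t - a) * u ∈ Icc a b := fun t ht u hu =>
    ⟨by nlinarith [ht.1, hu.1], by nlinarith [ht.1, ht.2, hu.2]⟩
  intro t₀ ht₀
  refine intervalIntegral.continuousWithinAt_of_dominated_interval
    (bound := fun u => ‖(1 - u) ^ (α - 1)‖ * M) ?_ ?_ (h_kernel.norm.mul_const M) ?_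
  · filter_upwards [self_mem_nhdsWithin] with t ht
    refine (h_kernel.smul_continuousOn ?_).def'.aestronglyMeasurable
    rw [uIcc_of_le zero_le_one]
    exact hg.comp (by fun_prop) (h_mem t ht)
  · filter_upwards [self_mem_nhdsWithin] with t ht
    refine .of_forall fun u hu => ?_
    rw [uIoc_of_le zero_le_one] at hu
    rw [norm_smul]
    gcongr
    exact hM _ (h_mem t ht u (Ioc_subset_Icc_self hu))
  · refine .of_forall fun u hu => ?_
    rw [uIoc_of_le zero_le_one] at hu
    have h_comp : ContinuousOn (fun t => g (a + (t - a) * u)) (Icc a b) :=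
      hg.comp (by fun_prop) fun t ht => h_mem t ht u (Ioc_subset_Icc_self hu)
    exact (h_comp t₀ ht₀).const_smul _

theorem abelIntegral_eq_integral_add_abelIntegral (hα : 0 < α) (hac : a ≤ c) (hct : c < t)
    (hg_int : IntervalIntegrable g volume a c) (hg_cont : ContinuousOn g (Icc c t)) :
    abelIntegral α a g t = (∫ τ in a..c, (t - τ) ^ (α - 1) • g τ) + abelIntegral α c g t := by
  refine (intervalIntegral.integral_add_adjacent_intervals ?_ ?_).symm
  · refine hg_int.continuousOn_smul ?_
    rw [uIcc_of_le hac]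
    exact ((continuousOn_uncurry_rpow_sub (α - 1) c).uncurry_left t hct).mono Icc_subset_Iic_self
  · refine (intervalIntegrable_rpow_sub (by linarith) c t t).smul_continuousOn ?_
    rwa [uIcc_of_le hct.le]

theorem continuousOn_abelIntegral_of_integrableOn (hα : 0 < α) (hg_int : IntegrableOn g (Ioc a b))
    (hg_cont : ContinuousOn g (Ioc a b)) : ContinuousOn (abelIntegral α a g) (Ioc a b) := by
  intro t₀ ht₀
  obtain ⟨c, hac, hct₀⟩ := exists_between ht₀.1
  have hcb : c ≤ b := hct₀.le.trans ht₀.2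
  have hg_int_left : IntervalIntegrable g volume a c :=
    (intervalIntegrable_iff_integrableOn_Ioc_of_le hac.le).2
      (hg_int.mono_set (Ioc_subset_Ioc_right hcb))
  have hg_cont_right : ContinuousOn g (Icc c b) :=
    hg_cont.mono fun t ht => ⟨hac.trans_le ht.1, ht.2⟩
  have h_left : ContinuousOn (fun t => ∫ τ in a..c, (t - τ) ^ (α - 1) • g τ) (Ioc c b) := by
    refine continuousOn_intervalIntegral_smul_of_continuousOn_uncurry
      ((continuousOn_uncurry_rpow_sub (α - 1) c).mono ?_) hg_int_left
    rw [uIcc_of_le hac.le]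
    exact prod_mono Ioc_subset_Ioi_self Icc_subset_Iic_self
  have h_right : ContinuousOn (abelIntegral α c g) (Ioc c b) :=
    (continuousOn_abelIntegral_of_continuousOn_Icc hα hg_cont_right).mono Ioc_subset_Icc_self
  have h_sum : ContinuousOn (abelIntegral α a g) (Ioc c b) :=
    (h_left.add h_right).congr fun t ht =>
      abelIntegral_eq_integral_add_abelIntegral hα hac.le ht.1 hg_int_left
        (hg_cont_right.mono (Icc_subset_Icc_right ht.2))
  refine (h_sum t₀ ⟨hct₀, ht₀.2⟩).mono_of_mem_nhdsWithin ?_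
  filter_upwards [self_mem_nhdsWithin, mem_nhdsWithin_of_mem_nhds (Ioi_mem_nhds hct₀)]
    with t ht hct using ⟨hct, ht.2⟩

end AbelIntegral

section WeightedContinuous

open Set Asymptotics

variable {E : Type*} [NormedAddCommGroup E]

theorem integrableOn_Ioc_of_continuousOn_of_integrableAtFilter {a b : ℝ} {g : ℝ → E}
    (hg_cont : ContinuousOn g (Ioc a b)) (hg_int : IntegrableAtFilter g (𝓝[>] a)) :
    IntegrableOn g (Ioc a b) := by
  obtain ⟨s, hs, hgs⟩ := hg_int
  obtain ⟨c, hac, hcs⟩ := mem_nhdsGT_iff_exists_Ioc_subset.1 hs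
  have hg_right : IntegrableOn g (Icc c b) :=
    (hg_cont.mono fun t ht => ⟨lt_of_lt_of_le hac ht.1, ht.2⟩).integrableOn_Icc
  refine ((hgs.mono_set hcs).union hg_right).mono_set fun t ht => ?_
  exact (le_total t c).imp (fun htc => ⟨ht.1, htc⟩) fun hct => ⟨hct, ht.2⟩

theorem isBigO_rpow_neg_of_tendsto_rpow_smul [NormedSpace ℝ E] {p : ℝ} {x : ℝ → E} {l : E}
    (h : Tendsto (fun t : ℝ => t ^ p • x t) (𝓝[>] 0) (𝓝 l)) :
    x =O[𝓝[>] 0] fun t => t ^ (-p) := by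
  have h_bounded : (fun t : ℝ => t ^ (-p) • t ^ p • x t) =O[𝓝[>] 0] fun t => t ^ (-p) := by
    simpa using (isBigO_refl (fun t : ℝ => t ^ (-p)) (𝓝[>] 0)).smul (h.isBigO_one ℝ)
  refine h_bounded.congr' ?_ .rfl
  filter_upwards [self_mem_nhdsWithin] with t ht
  rw [smul_smul, ← Real.rpow_add ht, neg_add_cancel, Real.rpow_zero, one_smul]

theorem integrableAtFilter_rpow_nhdsGT_zero {p : ℝ} (hp : -1 < p) :
    IntegrableAtFilter (fun t : ℝ => t ^ p) (𝓝[>] 0) :=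
  ⟨Ioc 0 1, Ioc_mem_nhdsGT one_pos, (intervalIntegral.intervalIntegrable_rpow' hp).1⟩

theorem memC.integrableOn_Ioc {α T : ℝ} (hα : 0 < α) (hT : 0 < T) {s : ℕ}
    {x : ℝ → (Fin s → ℝ)} (hx : memC α T x) : IntegrableOn x (Ioc 0 T) := by
  obtain ⟨hx_cont, l, hl⟩ := hx
  have hx_meas : StronglyMeasurableAtFilter x (𝓝[>] 0) :=
    ⟨Ioc 0 T, Ioc_mem_nhdsGT hT, hx_cont.aestronglyMeasurable measurableSet_Ioc⟩
  exact integrableOn_Ioc_of_continuousOn_of_integrableAtFilter hx_cont <|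
    (isBigO_rpow_neg_of_tendsto_rpow_smul hl).integrableAtFilter hx_meas <|
      integrableAtFilter_rpow_nhdsGT_zero (by linarith)

end WeightedContinuous

section LinearGrowth

open Set

variable {E F : Type*} [NormedAddCommGroup E] [NormedAddCommGroup F]

theorem exists_linear_growth_of_lipschitz {X : Type*} [TopologicalSpace X] {K : Set X}
    (hK : IsCompact K) {f : X → E → F} (hf : ContinuousOn (fun t => f t 0) K) {L : X → ℝ}
    (hL : ∃ C, ∀ t ∈ K, L t ≤ C)
    (hLip : ∀ t ∈ K, ∀ x y, ‖f t x - f t y‖ ≤ L t * ‖x - y‖) :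
    ∃ M C : ℝ, ∀ t ∈ K, ∀ x, ‖f t x‖ ≤ M + C * ‖x‖ := by
  obtain ⟨C, hC⟩ := hL
  obtain ⟨M, hM⟩ := hK.exists_bound_of_continuousOn hf
  refine ⟨M, C, fun t ht x => ?_⟩
  calc ‖f t x‖ ≤ ‖f t 0‖ + ‖f t x - f t 0‖ := norm_le_norm_add_norm_sub' _ _
    _ ≤ M + L t * ‖x - 0‖ := add_le_add (hM t ht) (hLip t ht x 0)
    _ ≤ M + C * ‖x‖ := by rw [sub_zero]; gcongr; exact hC t ht

theorem exists_linear_growth_Ioc_of_lipschitz_Ici {f : ℝ → E → F} (T : ℝ)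
    (hf : ContinuousOn (fun p : ℝ × E => f p.1 p.2) (Ici 0 ×ˢ univ)) {L : ℝ → ℝ}
    (hL : ∃ C, ∀ t, 0 ≤ t → L t ≤ C)
    (hLip : ∀ t, 0 ≤ t → ∀ x y, ‖f t x - f t y‖ ≤ L t * ‖x - y‖) :
    ∃ M C : ℝ, ∀ t ∈ Ioc 0 T, ∀ x, ‖f t x‖ ≤ M + C * ‖x‖ := by
  have hf_zero : ContinuousOn (fun t => f t 0) (Icc 0 T) :=
    hf.comp (f := fun t => (t, (0 : E))) (by fun_prop) fun t ht => ⟨ht.1, mem_univ _⟩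
  obtain ⟨M, C, hMC⟩ := exists_linear_growth_of_lipschitz isCompact_Icc hf_zero
    (hL.imp fun _ hC t ht => hC t ht.1) fun t ht => hLip t ht.1
  exact ⟨M, C, fun t ht => hMC t (Ioc_subset_Icc_self ht)⟩

theorem integrableOn_of_linear_growth {X : Type*} [MeasurableSpace X] {μ : Measure X} {S : Set X}
    (hS : MeasurableSet S) (hμS : μ S ≠ ⊤) {f : X → E → F} {M C : ℝ}
    (hf_growth : ∀ t ∈ S, ∀ x, ‖f t x‖ ≤ M + C * ‖x‖) {ξ : X → E} (hξ : IntegrableOn ξ S μ)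
    (hfξ : AEStronglyMeasurable (fun t => f t (ξ t)) (μ.restrict S)) :
    IntegrableOn (fun t => f t (ξ t)) S μ := by
  have h_bound : IntegrableOn (fun t => M + C * ‖ξ t‖) S μ :=
    (integrableOn_const hμS).add (hξ.norm.const_mul C)
  exact h_bound.mono' hfξ (ae_restrict_of_forall_mem hS fun t ht => hf_growth t ht (ξ t))

theorem stmt9_general [NormedSpace ℝ F] [CompleteSpace F] {α T : ℝ} (hα : 0 < α) {f : ℝ → E → F}
    (hf_cont : ContinuousOn (fun p : ℝ × E => f p.1 p.2) (Ioc 0 T ×ˢ univ))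
    (hf_growth : ∃ M C : ℝ, ∀ t ∈ Ioc 0 T, ∀ x, ‖f t x‖ ≤ M + C * ‖x‖)
    {ξ : ℝ → E} (hξ_cont : ContinuousOn ξ (Ioc 0 T)) (hξ_int : IntegrableOn ξ (Ioc 0 T)) :
    ContinuousOn (fun t : ℝ => ∫ τ in (0 : ℝ)..t, (t - τ) ^ (α - 1) • f τ (ξ τ)) (Ioc 0 T) := by
  obtain ⟨M, C, hMC⟩ := hf_growth
  have hfξ_cont : ContinuousOn (fun τ => f τ (ξ τ)) (Ioc 0 T) :=
    hf_cont.comp (continuousOn_id.prodMk hξ_cont) fun t ht => ⟨ht, mem_univ _⟩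
  have hfξ_int : IntegrableOn (fun τ => f τ (ξ τ)) (Ioc 0 T) :=
    integrableOn_of_linear_growth measurableSet_Ioc measure_Ioc_lt_top.ne hMC hξ_int
      (hfξ_cont.aestronglyMeasurable measurableSet_Ioc)
  exact continuousOn_abelIntegral_of_integrableOn hα hfξ_int hfξ_cont

end LinearGrowth

theorem stmt9 (α T : ℝ) (hα0 : 0 < α) (hα1 : α < 1) (hT : 0 < T) (s : ℕ)
    (f : ℝ → (Fin s → ℝ) → (Fin s → ℝ))
    (hfc : ContinuousOn (fun p : ℝ × (Fin s → ℝ) => f p.1 p.2)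
      (Set.Ici 0 ×ˢ (Set.univ : Set (Fin s → ℝ))))
    (L : ℝ → ℝ) (hL0 : ∀ t : ℝ, 0 ≤ t → 0 ≤ L t) (hLbd : ∃ C : ℝ, ∀ t : ℝ, 0 ≤ t → L t ≤ C)
    (hLip : ∀ t : ℝ, 0 ≤ t → ∀ x y : Fin s → ℝ, ‖f t x - f t y‖ ≤ L t * ‖x - y‖)
    (ξ : ℝ → (Fin s → ℝ)) (hξ : memC α T ξ) :
    ContinuousOn (fun t : ℝ => ∫ τ in (0:ℝ)..t, (t - τ) ^ (α - 1) • f τ (ξ τ))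
      (Set.Ioc 0 T) := by
  exact stmt9_general hα0 (hfc.mono (Set.prod_mono_left fun _ ht => ht.1.le))
    (exists_linear_growth_Ioc_of_lipschitz_Ici T hfc hLbd hLip) hξ.1 (hξ.integrableOn_Ioc hα0 hT)
end
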